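/- For every real number $r > 0$ and every natural number $n$, $\int_{(n+1+r)/r}^{(n+2+r)/r} (u-1)^{n+1}\, u^{-n-r-2}\, du < \int_{(n+1+r)/r}^{+\infty} (u-1)^n\, u^{-n-r-2}\left(\frac{ru}{n+1+r} - 1\right) du$. -/

import Mathlib

open Real MeasureTheory intervalIntegral

/-!
Put `p = n + 1`, `f u = (u - 1) ^ p * u ^ (-(p + r))` and `a = (p + r) / r`. Since `f'` has the sign
of `p + r - r * u`, the function `f` has its maximum at `a`, decreases to `0` on `[a, ∞)`, and the
right-hand integrand is `-f' / (p + r)`; hence the right-hand side is `f a / (p + r)`. The left-hand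
integrand is `f u / u`, so the left-hand side is at most
`f a * log (1 + 1 / (p + r)) < f a / (p + r)`.
-/

theorem intervalIntegral_div_le_mul_log_of_antitoneOn {f : ℝ → ℝ} {a b : ℝ} (ha : 0 < a)
    (hab : a ≤ b) (hf : AntitoneOn f (Set.Icc a b)) :
    ∫ u in a..b, f u / u ≤ f a * log (b / a) := by
  have hinv : ContinuousOn (fun u : ℝ => u⁻¹) (Set.uIcc a b) := by
    rw [Set.uIcc_of_le hab]
    exact continuousOn_id.inv₀ fun u hu => (ha.trans_le hu.1).ne'
  have hf_int : IntervalIntegrable f volume a b :=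
    AntitoneOn.intervalIntegrable (by rwa [Set.uIcc_of_le hab])
  calc ∫ u in a..b, f u / u = ∫ u in a..b, f u * u⁻¹ := by simp only [div_eq_mul_inv]
    _ ≤ ∫ u in a..b, f a * u⁻¹ := by
      refine integral_mono_on hab (hf_int.mul_continuousOn hinv)
        (hinv.intervalIntegrable.const_mul _) fun u hu => ?_
      have hu_pos : 0 < u := ha.trans_le hu.1
      gcongr
      exact hf (Set.left_mem_Icc.2 hab) hu hu.1
    _ = f a * log (b / a) := by
      rw [intervalIntegral.integral_const_mul, integral_inv_of_pos ha (ha.trans_le hab)]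

section SubOneRpowMulRpow

variable {p r a u : ℝ}

theorem hasDerivAt_sub_one_rpow_mul_rpow (hu : 1 < u) :
    HasDerivAt (fun u : ℝ => (u - 1) ^ p * u ^ (-(p + r)))
      ((u - 1) ^ (p - 1) * u ^ (-(p + r) - 1) * (p + r - r * u)) u := by
  have hu_sub : 0 < u - 1 := sub_pos.2 hu
  have hu_pos : 0 < u := one_pos.trans hu
  have h_left : HasDerivAt (fun u : ℝ => (u - 1) ^ p) (1 * p * (u - 1) ^ (p - 1)) u :=
    ((hasDerivAt_id u).sub_const 1).rpow_const (Or.inl hu_sub.ne')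
  have h_right : HasDerivAt (fun u : ℝ => u ^ (-(p + r)))
      (-(p + r) * u ^ (-(p + r) - 1)) u :=
    hasDerivAt_rpow_const (Or.inl hu_pos.ne')
  refine (h_left.mul h_right).congr_deriv ?_
  rw [rpow_sub_one hu_sub.ne', rpow_sub_one hu_pos.ne']
  field_simp
  ring

theorem tendsto_sub_one_rpow_mul_rpow_atTop (hr : 0 < r) :
    Filter.Tendsto (fun u : ℝ => (u - 1) ^ p * u ^ (-(p + r))) Filter.atTop (nhds 0) := by
  have h_ratio : Filter.Tendsto (fun u : ℝ => (1 - u⁻¹) ^ p) Filter.atTop (nhds 1) := by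
    simpa using (tendsto_inv_atTop_zero.const_sub (1 : ℝ)).rpow_const (p := p) (by simp)
  have h_prod := h_ratio.mul (tendsto_rpow_neg_atTop hr)
  rw [one_mul] at h_prod
  refine h_prod.congr' ?_
  filter_upwards [Filter.eventually_gt_atTop 1] with u hu
  have hu_pos : 0 < u := one_pos.trans hu
  have h_ratio_eq : 1 - u⁻¹ = (u - 1) / u := by field_simp
  rw [h_ratio_eq, div_rpow (sub_pos.2 hu).le hu_pos.le, neg_add, rpow_add hu_pos,
    rpow_neg hu_pos.le p, div_eq_mul_inv, mul_assoc]

theorem one_lt_add_div_self (hp : 0 < p) (hr : 0 < r) : 1 < (p + r) / r :=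
  (one_lt_div hr).2 (lt_add_of_pos_left r hp)

theorem antitoneOn_sub_one_rpow_mul_rpow (hp : 0 < p) (hr : 0 < r) :
    AntitoneOn (fun u : ℝ => (u - 1) ^ p * u ^ (-(p + r))) (Set.Ici ((p + r) / r)) := by
  have h_deriv : ∀ u ∈ Set.Ici ((p + r) / r), HasDerivAt _ _ u := fun u hu =>
    hasDerivAt_sub_one_rpow_mul_rpow (p := p) (r := r) ((one_lt_add_div_self hp hr).trans_le hu)
  refine antitoneOn_of_hasDerivWithinAt_nonpos (convex_Ici _)
    (fun u hu => (h_deriv u hu).continuousAt.continuousWithinAt)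
    (fun u hu => (h_deriv u (interior_subset hu)).hasDerivWithinAt) fun u hu => ?_
  have hu_mode : (p + r) / r ≤ u := interior_subset hu
  have hu_one : 1 < u := (one_lt_add_div_self hp hr).trans_le hu_mode
  rw [div_le_iff₀' hr] at hu_mode
  exact mul_nonpos_of_nonneg_of_nonpos (mul_nonneg (rpow_nonneg (sub_pos.2 hu_one).le _)
    (rpow_nonneg (one_pos.trans hu_one).le _)) (sub_nonpos.2 hu_mode)

theorem integral_Ici_sub_one_rpow_mul_rpow (hp : 0 < p) (hr : 0 < r) (ha : (p + r) / r ≤ a) :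
    ∫ u in Set.Ici a, (u - 1) ^ (p - 1) * u ^ (-(p + r) - 1) * (r * u / (p + r) - 1) =
      (a - 1) ^ p * a ^ (-(p + r)) / (p + r) := by
  have hs : 0 < p + r := add_pos hp hr
  have ha_one : 1 < a := (one_lt_add_div_self hp hr).trans_le ha
  have h_deriv : ∀ u ∈ Set.Ici a,
      HasDerivAt (fun u : ℝ => -((u - 1) ^ p * u ^ (-(p + r)) / (p + r)))
        ((u - 1) ^ (p - 1) * u ^ (-(p + r) - 1) * (r * u / (p + r) - 1)) u := fun u hu => by
    refine ((hasDerivAt_sub_one_rpow_mul_rpow (ha_one.trans_le hu)).div_const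
      (p + r)).neg.congr_deriv ?_
    field_simp
    ring
  have h_nonneg : ∀ u ∈ Set.Ioi a,
      0 ≤ (u - 1) ^ (p - 1) * u ^ (-(p + r) - 1) * (r * u / (p + r) - 1) := fun u hu => by
    have hu_one : 1 < u := ha_one.trans hu
    have h_factor : 0 ≤ r * u / (p + r) - 1 := by
      rw [sub_nonneg, one_le_div hs, ← div_le_iff₀' hr]
      exact ha.trans (le_of_lt hu)
    exact mul_nonneg (mul_nonneg (rpow_nonneg (sub_pos.2 hu_one).le _)
      (rpow_nonneg (one_pos.trans hu_one).le _)) h_factor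
  have h_lim : Filter.Tendsto (fun u : ℝ => -((u - 1) ^ p * u ^ (-(p + r)) / (p + r)))
      Filter.atTop (nhds 0) := by
    simpa using ((tendsto_sub_one_rpow_mul_rpow_atTop (p := p) hr).div_const (p + r)).neg
  rw [integral_Ici_eq_integral_Ioi,
    integral_Ioi_of_hasDerivAt_of_nonneg' h_deriv h_nonneg h_lim, zero_sub, neg_neg]

theorem intervalIntegral_sub_one_rpow_mul_rpow_lt (hp : 0 < p) (hr : 0 < r) :
    ∫ u in ((p + r) / r)..((p + 1 + r) / r), (u - 1) ^ p * u ^ (-(p + r) - 1) <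
      ((p + r) / r - 1) ^ p * ((p + r) / r) ^ (-(p + r)) / (p + r) := by
  set f : ℝ → ℝ := fun u => (u - 1) ^ p * u ^ (-(p + r)) with hf
  set a := (p + r) / r with ha
  set b := (p + 1 + r) / r with hb
  have ha_one : 1 < a := one_lt_add_div_self hp hr
  have ha_pos : 0 < a := one_pos.trans ha_one
  have hab : a < b := by rw [ha, hb]; gcongr; linarith
  have h_ratio : b / a - 1 = 1 / (p + r) := by rw [ha, hb]; field_simp; ring
  have hfa_pos : 0 < f a :=
    mul_pos (rpow_pos_of_pos (sub_pos.2 ha_one) _) (rpow_pos_of_pos ha_pos _)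
  calc ∫ u in a..b, (u - 1) ^ p * u ^ (-(p + r) - 1) = ∫ u in a..b, f u / u := by
        refine integral_congr fun u hu => ?_
        rw [Set.uIcc_of_le hab.le] at hu
        simp only [hf, rpow_sub_one (ha_pos.trans_le hu.1).ne', mul_div_assoc]
    _ ≤ f a * log (b / a) := intervalIntegral_div_le_mul_log_of_antitoneOn ha_pos hab.le
        ((antitoneOn_sub_one_rpow_mul_rpow hp hr).mono Set.Icc_subset_Ici_self)
    _ < f a * (b / a - 1) := by
        have h_log : log (b / a) < b / a - 1 :=
          log_lt_sub_one_of_pos (div_pos (ha_pos.trans hab) ha_pos)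
            ((one_lt_div ha_pos).2 hab).ne'
        exact mul_lt_mul_of_pos_left h_log hfa_pos
    _ = f a / (p + r) := by rw [h_ratio, mul_one_div]

end SubOneRpowMulRpow

theorem integral_lt_improper_general {r x : ℝ} (hr : 0 < r) (hx : -1 < x) :
    (∫ u in ((x + 1 + r) / r)..((x + 2 + r) / r), (u - 1) ^ (x + 1) * u ^ (-x - r - 2))
      < ∫ u in Set.Ici ((x + 1 + r) / r),
          (u - 1) ^ x * u ^ (-x - r - 2) * (r * u / (x + 1 + r) - 1) := by
  have hp : 0 < x + 1 := by linarith
  have h_lt := (intervalIntegral_sub_one_rpow_mul_rpow_lt hp hr).trans_eq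
    (integral_Ici_sub_one_rpow_mul_rpow hp hr le_rfl).symm
  have h_upper : x + 1 + 1 + r = x + 2 + r := by ring
  have h_exp : -(x + 1 + r) - 1 = -x - r - 2 := by ring
  rwa [h_upper, h_exp, add_sub_cancel_right] at h_lt

/-- For real `r > 0` and `n ∈ ℕ`,
`∫_{(n+1+r)/r}^{(n+2+r)/r} (u-1)^{n+1} u^{-n-r-2} du
  < ∫_{(n+1+r)/r}^∞ (u-1)^n u^{-n-r-2} (ru/(n+1+r) - 1) du`. -/
theorem integral_lt_improper (r : ℝ) (hr : 0 < r) (n : ℕ) :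
    (∫ u in ((n + 1 + r) / r)..((n + 2 + r) / r), (u - 1) ^ (n + 1) * u ^ (-(n : ℝ) - r - 2))
      < ∫ u in Set.Ici ((n + 1 + r) / r),
          (u - 1) ^ n * u ^ (-(n : ℝ) - r - 2) * (r * u / (n + 1 + r) - 1) := by
  have hn : (-1 : ℝ) < n := neg_one_lt_zero.trans_le n.cast_nonneg
  exact_mod_cast integral_lt_improper_general hr hn
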